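/- arXiv:2310.11483 — 5 statements merged into one kernel-verified Lean document; each statement's English description precedes it below -/
import Mathlib

section
/- The operation ⟨A,B⟩^≈ = ⟨B, U − B⟩ on 3^U is a Brouwer complementation: for all a,b ∈ 3^U, (B1) a ⊓ a^≈≈ = a; (B2) (a ⊔ b)^≈ = a^≈ ⊓ b^≈; (B3) a ⊓ a^≈ = 0, where 0 = ⟨∅,U⟩. -/
/-!
Pairs `(A, B)` of subsets of a universe `α` model elements `⟨A,B⟩`;
membership in `3^U` is the disjointness condition `A ∩ B = ∅`.
-/

namespace PBZ

variable {α : Type*}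

/-- Membership in `3^U`: the two components are disjoint. -/
def mem3 (a : Set α × Set α) : Prop := a.1 ∩ a.2 = ∅

/-- `⟨A,B⟩ ⊓ ⟨C,D⟩ = ⟨A ∩ C, B ∪ D⟩`. -/
def meet (a b : Set α × Set α) : Set α × Set α := (a.1 ∩ b.1, a.2 ∪ b.2)

/-- `⟨A,B⟩ ⊔ ⟨C,D⟩ = ⟨A ∪ C, B ∩ D⟩`. -/
def join (a b : Set α × Set α) : Set α × Set α := (a.1 ∪ b.1, a.2 ∩ b.2)

/-- Induced order: `⟨A,B⟩ ≤ ⟨C,D⟩` iff `A ⊆ C` and `D ⊆ B`. -/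
def le (a b : Set α × Set α) : Prop := a.1 ⊆ b.1 ∧ b.2 ⊆ a.2

/-- Kleene complementation `⟨A,B⟩⁻ = ⟨B,A⟩`. -/
def kneg (a : Set α × Set α) : Set α × Set α := (a.2, a.1)

/-- Brouwer complementation `⟨A,B⟩^≈ = ⟨B, U − B⟩`. -/
def bneg (a : Set α × Set α) : Set α × Set α := (a.2, a.2ᶜ)

/-- `0 = ⟨∅, U⟩`. -/
def bot : Set α × Set α := (∅, Set.univ)

/-- `1 = ⟨U, ∅⟩`. -/
def top : Set α × Set α := (Set.univ, ∅)

/-- Equivalence class `[x]_R`. -/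
def cls (r : α → α → Prop) (x : α) : Set α := {y | r x y}

/-- Lower approximation `R̲X = {x : [x]_R ⊆ X}`. -/
def lower (r : α → α → Prop) (X : Set α) : Set α := {x | cls r x ⊆ X}

/-- Upper approximation `R̄X = {x : [x]_R ∩ X ≠ ∅}`. -/
def upper (r : α → α → Prop) (X : Set α) : Set α := {x | (cls r x ∩ X).Nonempty}

/-- Pawlak operator `⟨A,B⟩^L = ⟨R̲A, R̲B⟩`. -/
def pawlak (r : α → α → Prop) (a : Set α × Set α) : Set α × Set α :=
  (lower r a.1, lower r a.2)

end PBZ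

open PBZ

namespace PBZ

section BooleanAlgebra

open OrderDual

variable {β : Type*} [BooleanAlgebra β]

/-- The Brouwer complementation `(a, b) ↦ (b, bᶜ)` of pairs of elements of a Boolean algebra,
meant for disjoint pairs. The second coordinate lives in the order dual, so that the lattice
structure of `β × βᵒᵈ` is the one of `3^U` when `β = Set U`. -/
def brouwerCompl (x : β × βᵒᵈ) : β × βᵒᵈ :=
  (ofDual x.2, toDual (ofDual x.2)ᶜ)

theorem brouwerCompl_brouwerCompl (x : β × βᵒᵈ) :
    brouwerCompl (brouwerCompl x) = ((ofDual x.2)ᶜ, x.2) :=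
  Prod.ext rfl (congrArg toDual (compl_compl (ofDual x.2)))

theorem le_brouwerCompl_brouwerCompl_iff {x : β × βᵒᵈ} :
    x ≤ brouwerCompl (brouwerCompl x) ↔ Disjoint x.1 (ofDual x.2) := by
  rw [brouwerCompl_brouwerCompl, Prod.le_def, and_iff_left le_rfl, le_compl_iff_disjoint_right]

theorem brouwerCompl_sup (x y : β × βᵒᵈ) :
    brouwerCompl (x ⊔ y) = brouwerCompl x ⊓ brouwerCompl y :=
  Prod.ext rfl (congrArg toDual compl_inf)

theorem inf_brouwerCompl_eq_bot_iff {x : β × βᵒᵈ} :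
    x ⊓ brouwerCompl x = ⊥ ↔ Disjoint x.1 (ofDual x.2) := by
  have snd_eq_bot : (x ⊓ brouwerCompl x).2 = (⊥ : β × βᵒᵈ).2 :=
    congrArg toDual sup_compl_eq_top
  rw [Prod.ext_iff, and_iff_left snd_eq_bot]
  exact disjoint_iff.symm

end BooleanAlgebra

theorem mem3_iff_disjoint {α : Type*} {a : Set α × Set α} : mem3 a ↔ Disjoint a.1 a.2 :=
  Set.disjoint_iff_inter_eq_empty.symm

end PBZ

theorem stmt_2_general (β : Type*) [BooleanAlgebra β] :
    (∀ x : β × βᵒᵈ, Disjoint x.1 (OrderDual.ofDual x.2) →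
      x ⊓ brouwerCompl (brouwerCompl x) = x) ∧
    (∀ x y : β × βᵒᵈ, brouwerCompl (x ⊔ y) = brouwerCompl x ⊓ brouwerCompl y) ∧
    (∀ x : β × βᵒᵈ, Disjoint x.1 (OrderDual.ofDual x.2) → x ⊓ brouwerCompl x = ⊥) :=
  ⟨fun _ hx => inf_eq_left.mpr (le_brouwerCompl_brouwerCompl_iff.mpr hx),
    brouwerCompl_sup,
    fun _ hx => inf_brouwerCompl_eq_bot_iff.mpr hx⟩

/-- `⟨A,B⟩^≈ = ⟨B, U − B⟩` is a Brouwer complementation on `3^U`: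
(B1) `a ⊓ a^≈≈ = a`; (B2) `(a ⊔ b)^≈ = a^≈ ⊓ b^≈`; (B3) `a ⊓ a^≈ = 0`. -/
theorem stmt_2 (α : Type*) :
    (∀ a : Set α × Set α, mem3 a → meet a (bneg (bneg a)) = a) ∧
    (∀ a b : Set α × Set α, mem3 a → mem3 b → bneg (join a b) = meet (bneg a) (bneg b)) ∧
    (∀ a : Set α × Set α, mem3 a → meet a (bneg a) = bot) := by
  -- `meet`, `join`, `bneg` and `bot` unfold to `⊓`, `⊔`, `brouwerCompl` and `⊥` on
  -- `Set α × (Set α)ᵒᵈ`.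
  obtain ⟨b1, b2, b3⟩ := stmt_2_general (Set α)
  exact ⟨fun a ha => b1 a (mem3_iff_disjoint.mp ha), fun a b _ _ => b2 a b,
    fun a ha => b3 a (mem3_iff_disjoint.mp ha)⟩
end

section
/- The Pawlak operator ^L on 3^U satisfies axiom A5: for all a,b ∈ 3^U, if a^≈ = b^≈ then a^L ⊓ b^L = (a ⊓ b)^L. -/
open PBZ

namespace PBZ

variable {α : Type*} (r : α → α → Prop)

theorem lower_inter (X Y : Set α) : lower r (X ∩ Y) = lower r X ∩ lower r Y :=
  Set.ext fun _ => Set.subset_inter_iff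

theorem bneg_eq_bneg_iff {a b : Set α × Set α} : bneg a = bneg b ↔ a.2 = b.2 :=
  ⟨congrArg Prod.fst, congrArg fun X => (X, Xᶜ)⟩

theorem meet_pawlak_eq_pawlak_meet_iff {a b : Set α × Set α} :
    meet (pawlak r a) (pawlak r b) = pawlak r (meet a b) ↔
      lower r a.2 ∪ lower r b.2 = lower r (a.2 ∪ b.2) := by
  simp only [meet, pawlak, lower_inter, Prod.mk.injEq, true_and]

end PBZ

theorem stmt_7_general {α : Type*} (r : α → α → Prop) {a b : Set α × Set α}
    (h : bneg a = bneg b) :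
    meet (pawlak r a) (pawlak r b) = pawlak r (meet a b) := by
  have h_snd : a.2 = b.2 := bneg_eq_bneg_iff.mp h
  rw [meet_pawlak_eq_pawlak_meet_iff, h_snd, Set.union_self, Set.union_self]

/-- A5: for all `a, b ∈ 3^U`, if `a^≈ = b^≈` then
`a^L ⊓ b^L = (a ⊓ b)^L`. -/
theorem stmt_7 {α : Type*} (r : α → α → Prop) (hr : Equivalence r) :
    ∀ a b : Set α × Set α, mem3 a → mem3 b → bneg a = bneg b →
      meet (pawlak r a) (pawlak r b) = pawlak r (meet a b) :=
  fun _ _ _ _ h => stmt_7_general r h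
end

section
/- For all disjoint A,B ⊆ U, the seven truth-value parts T(A,B), sT(A,B), Un(A,B), K(A,B), fK(A,B), sF(A,B), F(A,B) are pairwise disjoint and their union is U. -/
/-!
Rough-set approximations and the seven truth-value parts.
`U − B` is the complement `Bᶜ`, and `U − A − B` is `(A ∪ B)ᶜ`.
-/

namespace PBZ

variable {α : Type*}

/-- True part `T(A,B) = R̲A`. -/
def Tpart (r : α → α → Prop) (A _B : Set α) : Set α := lower r A

/-- Sometimes true part `sT(A,B) = R̲(U−B) ∩ R̄A ∩ R̄(U−A−B)`. -/
def sTpart (r : α → α → Prop) (A B : Set α) : Set α :=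
  lower r Bᶜ ∩ upper r A ∩ upper r (A ∪ B)ᶜ

/-- Unknown part `Un(A,B) = R̲(U−A−B)`. -/
def Unpart (r : α → α → Prop) (A B : Set α) : Set α := lower r (A ∪ B)ᶜ

/-- Contradictory part `K(A,B) = R̲(A∪B) ∩ R̄A ∩ R̄B`. -/
def Kpart (r : α → α → Prop) (A B : Set α) : Set α :=
  lower r (A ∪ B) ∩ upper r A ∩ upper r B

/-- Fully contradictory part `fK(A,B) = R̄A ∩ R̄B ∩ R̄(U−A−B)`. -/
def fKpart (r : α → α → Prop) (A B : Set α) : Set α :=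
  upper r A ∩ upper r B ∩ upper r (A ∪ B)ᶜ

/-- Sometimes false part `sF(A,B) = R̲(U−A) ∩ R̄B ∩ R̄(U−A−B)`. -/
def sFpart (r : α → α → Prop) (A B : Set α) : Set α :=
  lower r Aᶜ ∩ upper r B ∩ upper r (A ∪ B)ᶜ

/-- False part `F(A,B) = R̲B`. -/
def Fpart (r : α → α → Prop) (_A B : Set α) : Set α := lower r B

end PBZ

open PBZ

/-- The seven truth-value parts, indexed by `Fin 7`. -/
def sevenParts {α : Type*} (r : α → α → Prop) (A B : Set α) : Fin 7 → Set α :=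
  ![Tpart r A B, sTpart r A B, Unpart r A B, Kpart r A B,
    fKpart r A B, sFpart r A B, Fpart r A B]

/-!
Label the points of `A`, of `B` and of `U − A − B` by `1`, `-1` and `0`. Each of the seven parts
consists of the `x` for which the set of labels occurring in `[x]_R` is one prescribed nonempty
subset of `{1, -1, 0}`, and each of the seven nonempty subsets is prescribed exactly once.
-/

namespace PBZ

section Labels

variable {α ι : Type*} {r : α → α → Prop}

/-- The set of labels that the labelling `f` takes on the class `[x]_R`. A labelling encodes the
partition of `U` into its fibres, so this records which blocks the class meets. -/
def labels (r : α → α → Prop) (f : α → ι) (x : α) : Set ι := f '' cls r x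

theorem mem_lower_preimage {f : α → ι} {s : Set ι} {x : α} :
    x ∈ lower r (f ⁻¹' s) ↔ labels r f x ⊆ s :=
  Set.image_subset_iff.symm

theorem mem_upper_preimage_singleton {f : α → ι} {i : ι} {x : α} :
    x ∈ upper r (f ⁻¹' {i}) ↔ i ∈ labels r f x :=
  Iff.rfl

theorem labels_nonempty (hr : Relator.LeftTotal r) (f : α → ι) (x : α) :
    (labels r f x).Nonempty :=
  Set.Nonempty.image f (hr x)

theorem lower_preimage_singleton (hr : Relator.LeftTotal r) (f : α → ι) (i : ι) :
    lower r (f ⁻¹' {i}) = labels r f ⁻¹' {{i}} := by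
  ext x
  exact mem_lower_preimage.trans (labels_nonempty hr f x).subset_singleton_iff

theorem lower_preimage_pair_inter_upper (r : α → α → Prop) (f : α → ι) (i j : ι) :
    lower r (f ⁻¹' {i, j}) ∩ upper r (f ⁻¹' {i}) ∩ upper r (f ⁻¹' {j}) =
      labels r f ⁻¹' {{i, j}} := by
  ext x
  simp only [Set.mem_inter_iff, mem_lower_preimage, mem_upper_preimage_singleton, and_assoc,
    Set.mem_preimage, Set.mem_singleton_iff, Set.Subset.antisymm_iff, Set.pair_subset_iff]

end Labels

section Verdict

variable {α : Type*} {r : α → α → Prop} {A B : Set α}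

open Classical in
/-- The labelling of `U` attached to the pair `(A, B)`: `1` on `A`, `-1` on `B`, and `0` elsewhere.
On `A ∩ B` the value is `1`. -/
noncomputable def verdict (A B : Set α) (x : α) : SignType :=
  if x ∈ A then 1 else if x ∈ B then -1 else 0

theorem verdict_preimage_one (A B : Set α) : verdict A B ⁻¹' {1} = A := by
  ext x
  by_cases hA : x ∈ A <;> by_cases hB : x ∈ B <;> simp [verdict, hA, hB]

theorem verdict_preimage_neg_one (hAB : Disjoint A B) : verdict A B ⁻¹' {-1} = B := by
  ext x
  by_cases hA : x ∈ A
  · simp [verdict, hA, hAB.notMem_of_mem_left hA]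
  · by_cases hB : x ∈ B <;> simp [verdict, hA, hB]

theorem verdict_preimage_zero (A B : Set α) : verdict A B ⁻¹' {0} = (A ∪ B)ᶜ := by
  ext x
  by_cases hA : x ∈ A <;> by_cases hB : x ∈ B <;> simp [verdict, hA, hB]

theorem verdict_preimage_one_neg_one (hAB : Disjoint A B) :
    verdict A B ⁻¹' {1, -1} = A ∪ B := by
  rw [Set.insert_eq, Set.preimage_union, verdict_preimage_one, verdict_preimage_neg_one hAB]

theorem verdict_preimage_one_zero (hAB : Disjoint A B) : verdict A B ⁻¹' {1, 0} = Bᶜ := by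
  have pair_eq_compl : ({1, 0} : Set SignType) = {-1}ᶜ := by ext s; cases s <;> simp
  rw [pair_eq_compl, Set.preimage_compl, verdict_preimage_neg_one hAB]

theorem verdict_preimage_neg_one_zero (A B : Set α) : verdict A B ⁻¹' {-1, 0} = Aᶜ := by
  have pair_eq_compl : ({-1, 0} : Set SignType) = {1}ᶜ := by ext s; cases s <;> simp
  rw [pair_eq_compl, Set.preimage_compl, verdict_preimage_one]

theorem Tpart_eq_preimage_labels (hr : Relator.LeftTotal r) (A B : Set α) :
    Tpart r A B = labels r (verdict A B) ⁻¹' {{1}} := by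
  rw [← lower_preimage_singleton hr, verdict_preimage_one, Tpart]

theorem sTpart_eq_preimage_labels (r : α → α → Prop) (hAB : Disjoint A B) :
    sTpart r A B = labels r (verdict A B) ⁻¹' {{1, 0}} := by
  rw [← lower_preimage_pair_inter_upper, verdict_preimage_one_zero hAB, verdict_preimage_one,
    verdict_preimage_zero, sTpart]

theorem Unpart_eq_preimage_labels (hr : Relator.LeftTotal r) (A B : Set α) :
    Unpart r A B = labels r (verdict A B) ⁻¹' {{0}} := by
  rw [← lower_preimage_singleton hr, verdict_preimage_zero, Unpart]

theorem Kpart_eq_preimage_labels (r : α → α → Prop) (hAB : Disjoint A B) :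
    Kpart r A B = labels r (verdict A B) ⁻¹' {{1, -1}} := by
  rw [← lower_preimage_pair_inter_upper, verdict_preimage_one_neg_one hAB, verdict_preimage_one,
    verdict_preimage_neg_one hAB, Kpart]

theorem fKpart_eq_preimage_labels (r : α → α → Prop) (hAB : Disjoint A B) :
    fKpart r A B = labels r (verdict A B) ⁻¹' {Set.univ} := by
  have eq_univ_iff (s : Set SignType) : s = Set.univ ↔ (1 ∈ s ∧ -1 ∈ s) ∧ 0 ∈ s := by
    refine ⟨by rintro rfl; simp, fun ⟨⟨pos, neg⟩, zero⟩ ↦ Set.eq_univ_of_forall ?_⟩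
    rintro (_ | _ | _) <;> assumption
  ext x
  rw [Set.mem_preimage, Set.mem_singleton_iff, eq_univ_iff]
  simp only [← mem_upper_preimage_singleton, verdict_preimage_one, verdict_preimage_neg_one hAB,
    verdict_preimage_zero, fKpart, Set.mem_inter_iff]

theorem sFpart_eq_preimage_labels (r : α → α → Prop) (hAB : Disjoint A B) :
    sFpart r A B = labels r (verdict A B) ⁻¹' {{-1, 0}} := by
  rw [← lower_preimage_pair_inter_upper, verdict_preimage_neg_one_zero,
    verdict_preimage_neg_one hAB, verdict_preimage_zero, sFpart]

theorem Fpart_eq_preimage_labels (hr : Relator.LeftTotal r) (hAB : Disjoint A B) :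
    Fpart r A B = labels r (verdict A B) ⁻¹' {{-1}} := by
  rw [← lower_preimage_singleton hr, verdict_preimage_neg_one hAB, Fpart]

/-- The label set that characterises each of the seven parts, in the order of `sevenParts`.
The values are finsets so that statements about them are decidable. -/
def sevenLabels : Fin 7 → Finset SignType :=
  ![{1}, {1, 0}, {0}, {1, -1}, Finset.univ, {-1, 0}, {-1}]

theorem sevenLabels_injective : Function.Injective sevenLabels := by
  decide

theorem exists_coe_sevenLabels_eq {s : Set SignType} (hs : s.Nonempty) :
    ∃ i, (sevenLabels i : Set SignType) = s := by
  have surjective_on_nonempty : ∀ t : Finset SignType, t.Nonempty → ∃ i, sevenLabels i = t := by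
    decide
  lift s to Finset SignType using s.toFinite
  exact_mod_cast surjective_on_nonempty s (Finset.coe_nonempty.mp hs)

theorem sevenParts_eq_preimage_labels (hr : Relator.LeftTotal r) (hAB : Disjoint A B)
    (i : Fin 7) :
    sevenParts r A B i = labels r (verdict A B) ⁻¹' {(sevenLabels i : Set SignType)} := by
  fin_cases i
  · simpa [sevenLabels] using! Tpart_eq_preimage_labels hr A B
  · simpa [sevenLabels] using! sTpart_eq_preimage_labels r hAB
  · simpa [sevenLabels] using! Unpart_eq_preimage_labels hr A B
  · simpa [sevenLabels] using! Kpart_eq_preimage_labels r hAB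
  · simpa [sevenLabels] using! fKpart_eq_preimage_labels r hAB
  · simpa [sevenLabels] using! sFpart_eq_preimage_labels r hAB
  · simpa [sevenLabels] using! Fpart_eq_preimage_labels hr hAB

end Verdict

end PBZ

open scoped Function in
theorem stmt_12_general {α : Type*} {r : α → α → Prop} (hr : Relator.LeftTotal r)
    {A B : Set α} (hAB : Disjoint A B) :
    Pairwise (Disjoint on sevenParts r A B) ∧
    (⋃ i : Fin 7, sevenParts r A B i) = Set.univ := by
  simp only [Function.onFun, Pairwise, sevenParts_eq_preimage_labels hr hAB]
  refine ⟨fun i j hij ↦ Disjoint.preimage _ ?_, Set.iUnion_eq_univ_iff.mpr fun x ↦ ?_⟩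
  · rw [Set.disjoint_singleton, Ne, Finset.coe_inj]
    exact sevenLabels_injective.ne hij
  · obtain ⟨i, hi⟩ := exists_coe_sevenLabels_eq (labels_nonempty hr (verdict A B) x)
    exact ⟨i, hi.symm⟩

/-- for disjoint `A, B ⊆ U`, the seven truth-value parts are
pairwise disjoint and their union is `U`. -/
theorem stmt_12 {α : Type*} (r : α → α → Prop) (hr : Equivalence r)
    (A B : Set α) (hAB : A ∩ B = ∅) :
    (∀ i j : Fin 7, i ≠ j → sevenParts r A B i ∩ sevenParts r A B j = ∅) ∧
    (⋃ i : Fin 7, sevenParts r A B i) = Set.univ := by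
  obtain ⟨disjoint_parts, iUnion_parts⟩ :=
    stmt_12_general (.refl hr.refl) (Set.disjoint_iff_inter_eq_empty.mpr hAB)
  exact ⟨fun _ _ hij ↦ (disjoint_parts hij).inter_eq, iUnion_parts⟩
end

section
/- For all disjoint A,B ⊆ U and all x ∈ U, membership in the seven truth-value parts is characterized by the three upper approximations R̄A, R̄B, R̄(U−A−B) as follows: x ∈ T(A,B) iff (x ∈ R̄A and x ∉ R̄B and x ∉ R̄(U−A−B)); x ∈ sT(A,B) iff (x ∈ R̄A and x ∉ R̄B and x ∈ R̄(U−A−B)); x ∈ Un(A,B) iff (x ∉ R̄A and x ∉ R̄B and x ∈ R̄(U−A−B)); x ∈ K(A,B) iff (x ∈ R̄A and x ∈ R̄B and x ∉ R̄(U−A−B)); x ∈ fK(A,B) iff (x ∈ R̄A and x ∈ R̄B and x ∈ R̄(U−A−B)); x ∈ sF(A,B) iff (x ∉ R̄A and x ∈ R̄B and x ∈ R̄(U−A−B)); x ∈ F(A,B) iff (x ∉ R̄A and x ∈ R̄B and x ∉ R̄(U−A−B)). -/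
open PBZ

/-!
Lower and upper approximation are dual under complementation, and the upper approximation
distributes over unions. Each lower approximation in the definitions therefore says which of `A`,
`B` and `(A ∪ B)ᶜ` the class of `x` misses. As a nonempty class meets at least one of these three
sets, a class that misses two of them must meet the third.
-/

namespace PBZ

variable {α : Type*} {r : α → α → Prop} {A B X : Set α} {x : α}

theorem lower_eq_compl_upper_compl (r : α → α → Prop) (X : Set α) :
    lower r X = (upper r Xᶜ)ᶜ :=
  Set.ext fun _ => Set.inter_compl_nonempty_iff.not_left.symm

theorem lower_compl (r : α → α → Prop) (X : Set α) : lower r Xᶜ = (upper r X)ᶜ := by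
  rw [lower_eq_compl_upper_compl, compl_compl]

theorem upper_union (r : α → α → Prop) (X Y : Set α) :
    upper r (X ∪ Y) = upper r X ∪ upper r Y := by
  ext x
  simp only [upper, Set.mem_ofPred_eq, Set.mem_union, Set.inter_union_distrib_left,
    Set.union_nonempty]

theorem mem_upper_of_mem_lower (hx : (cls r x).Nonempty) (h : x ∈ lower r X) : x ∈ upper r X :=
  hx.mono (Set.subset_inter subset_rfl h)

theorem lower_eq_of_disjoint (r : α → α → Prop) (hAB : Disjoint A B) :
    lower r A = (upper r B)ᶜ ∩ (upper r (A ∪ B)ᶜ)ᶜ := by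
  have compl_eq : Aᶜ = B ∪ (A ∪ B)ᶜ := by
    rw [Set.compl_union, ← Set.sdiff_eq, Set.union_sdiff_cancel hAB.subset_compl_left]
  rw [lower_eq_compl_upper_compl, compl_eq, upper_union, Set.compl_union]

theorem lower_compl_union (r : α → α → Prop) (A B : Set α) :
    lower r (A ∪ B)ᶜ = (upper r A)ᶜ ∩ (upper r B)ᶜ := by
  rw [lower_compl, upper_union, Set.compl_union]

theorem mem_Tpart_iff (hx : (cls r x).Nonempty) (hAB : Disjoint A B) :
    x ∈ Tpart r A B ↔ x ∈ upper r A ∧ x ∉ upper r B ∧ x ∉ upper r (A ∪ B)ᶜ := by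
  have mem_lower_iff : x ∈ lower r A ↔ x ∉ upper r B ∧ x ∉ upper r (A ∪ B)ᶜ :=
    Set.ext_iff.1 (lower_eq_of_disjoint r hAB) x
  exact ⟨fun h => ⟨mem_upper_of_mem_lower hx h, mem_lower_iff.1 h⟩, fun h => mem_lower_iff.2 h.2⟩

theorem mem_sTpart_iff :
    x ∈ sTpart r A B ↔ x ∈ upper r A ∧ x ∉ upper r B ∧ x ∈ upper r (A ∪ B)ᶜ := by
  simp only [sTpart, lower_compl, Set.mem_inter_iff, Set.mem_compl_iff]
  tauto

theorem mem_Unpart_iff (hx : (cls r x).Nonempty) :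
    x ∈ Unpart r A B ↔ x ∉ upper r A ∧ x ∉ upper r B ∧ x ∈ upper r (A ∪ B)ᶜ := by
  have mem_lower_iff : x ∈ lower r (A ∪ B)ᶜ ↔ x ∉ upper r A ∧ x ∉ upper r B :=
    Set.ext_iff.1 (lower_compl_union r A B) x
  rw [← and_assoc, ← mem_lower_iff]
  exact ⟨fun h => ⟨h, mem_upper_of_mem_lower hx h⟩, And.left⟩

theorem mem_Kpart_iff :
    x ∈ Kpart r A B ↔ x ∈ upper r A ∧ x ∈ upper r B ∧ x ∉ upper r (A ∪ B)ᶜ := by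
  simp only [Kpart, lower_eq_compl_upper_compl, Set.mem_inter_iff, Set.mem_compl_iff]
  tauto

theorem mem_fKpart_iff :
    x ∈ fKpart r A B ↔ x ∈ upper r A ∧ x ∈ upper r B ∧ x ∈ upper r (A ∪ B)ᶜ :=
  and_assoc

theorem sFpart_eq_sTpart_swap (r : α → α → Prop) (A B : Set α) :
    sFpart r A B = sTpart r B A := by
  rw [sFpart, sTpart, Set.union_comm]

theorem mem_sFpart_iff :
    x ∈ sFpart r A B ↔ x ∉ upper r A ∧ x ∈ upper r B ∧ x ∈ upper r (A ∪ B)ᶜ := by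
  rw [sFpart_eq_sTpart_swap, mem_sTpart_iff, and_left_comm, Set.union_comm]

theorem mem_Fpart_iff (hx : (cls r x).Nonempty) (hAB : Disjoint A B) :
    x ∈ Fpart r A B ↔ x ∉ upper r A ∧ x ∈ upper r B ∧ x ∉ upper r (A ∪ B)ᶜ := by
  rw [and_left_comm, Set.union_comm]
  exact mem_Tpart_iff hx hAB.symm

end PBZ

theorem stmt_13_general {α : Type*} (r : α → α → Prop) (hr : Relator.LeftTotal r)
    (A B : Set α) (hAB : Disjoint A B) :
    (∀ x, x ∈ Tpart r A B ↔
      x ∈ upper r A ∧ x ∉ upper r B ∧ x ∉ upper r (A ∪ B)ᶜ) ∧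
    (∀ x, x ∈ sTpart r A B ↔
      x ∈ upper r A ∧ x ∉ upper r B ∧ x ∈ upper r (A ∪ B)ᶜ) ∧
    (∀ x, x ∈ Unpart r A B ↔
      x ∉ upper r A ∧ x ∉ upper r B ∧ x ∈ upper r (A ∪ B)ᶜ) ∧
    (∀ x, x ∈ Kpart r A B ↔
      x ∈ upper r A ∧ x ∈ upper r B ∧ x ∉ upper r (A ∪ B)ᶜ) ∧
    (∀ x, x ∈ fKpart r A B ↔
      x ∈ upper r A ∧ x ∈ upper r B ∧ x ∈ upper r (A ∪ B)ᶜ) ∧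
    (∀ x, x ∈ sFpart r A B ↔
      x ∉ upper r A ∧ x ∈ upper r B ∧ x ∈ upper r (A ∪ B)ᶜ) ∧
    (∀ x, x ∈ Fpart r A B ↔
      x ∉ upper r A ∧ x ∈ upper r B ∧ x ∉ upper r (A ∪ B)ᶜ) :=
  ⟨fun x => mem_Tpart_iff (hr x) hAB, fun _ => mem_sTpart_iff, fun x => mem_Unpart_iff (hr x),
    fun _ => mem_Kpart_iff, fun _ => mem_fKpart_iff, fun _ => mem_sFpart_iff,
    fun x => mem_Fpart_iff (hr x) hAB⟩

/-- membership in the seven truth-value parts is characterized by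
the three upper approximations `R̄A`, `R̄B`, `R̄(U−A−B)`. -/
theorem stmt_13 {α : Type*} (r : α → α → Prop) (hr : Equivalence r)
    (A B : Set α) (hAB : A ∩ B = ∅) :
    (∀ x, x ∈ Tpart r A B ↔
      x ∈ upper r A ∧ x ∉ upper r B ∧ x ∉ upper r (A ∪ B)ᶜ) ∧
    (∀ x, x ∈ sTpart r A B ↔
      x ∈ upper r A ∧ x ∉ upper r B ∧ x ∈ upper r (A ∪ B)ᶜ) ∧
    (∀ x, x ∈ Unpart r A B ↔
      x ∉ upper r A ∧ x ∉ upper r B ∧ x ∈ upper r (A ∪ B)ᶜ) ∧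
    (∀ x, x ∈ Kpart r A B ↔
      x ∈ upper r A ∧ x ∈ upper r B ∧ x ∉ upper r (A ∪ B)ᶜ) ∧
    (∀ x, x ∈ fKpart r A B ↔
      x ∈ upper r A ∧ x ∈ upper r B ∧ x ∈ upper r (A ∪ B)ᶜ) ∧
    (∀ x, x ∈ sFpart r A B ↔
      x ∉ upper r A ∧ x ∈ upper r B ∧ x ∈ upper r (A ∪ B)ᶜ) ∧
    (∀ x, x ∈ Fpart r A B ↔
      x ∉ upper r A ∧ x ∈ upper r B ∧ x ∉ upper r (A ∪ B)ᶜ) :=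
  stmt_13_general r (fun x => ⟨x, hr.refl x⟩) A B (Set.disjoint_iff_inter_eq_empty.2 hAB)
end

section
/- For all disjoint A,B ⊆ U, the 'at least contradictory' part satisfies K(A,B) ∪ sT(A,B) ∪ T(A,B) = {x ∈ U : ([x]_R ⊆ A∪B or [x]_R ⊆ U−B) and [x]_R ∩ A ≠ ∅} = (R̲(A∪B) ∪ R̲(U−B)) ∩ R̄A. -/
open PBZ

namespace PBZ

variable {α : Type*} {r : α → α → Prop} {X Y Z : Set α}

theorem lower_mono (h : X ⊆ Y) : lower r X ⊆ lower r Y :=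
  fun _ hx => hx.trans h

theorem lower_subset_upper (hr : Relator.LeftTotal r) : lower r X ⊆ upper r X := by
  intro x hx
  obtain ⟨y, hxy⟩ := hr x
  exact ⟨y, hxy, hx hxy⟩

theorem lower_subset_lower_union_upper (h : Z ⊆ X ∪ Y) :
    lower r Z ⊆ lower r X ∪ upper r Y := by
  intro x hx
  refine or_iff_not_imp_right.2 fun hxY y hxy => ?_
  exact (h (hx hxy)).resolve_right fun hy => hxY ⟨y, hxy, hy⟩

/-- A class inside `X ∪ Y` that misses `Y` lies in `X`, so adjoining `lower r X` absorbs the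
condition `upper r Y`; this removes the last condition of both `Kpart` and `sTpart`. -/
theorem lower_inter_upper_inter_upper_union_lower (hr : Relator.LeftTotal r) (h : Z ⊆ X ∪ Y) :
    lower r Z ∩ upper r X ∩ upper r Y ∪ lower r X = (lower r Z ∪ lower r X) ∩ upper r X := by
  have hZY : lower r Z ∪ lower r X ⊆ upper r Y ∪ lower r X :=
    Set.union_subset ((lower_subset_lower_union_upper h).trans_eq (Set.union_comm _ _))
      Set.subset_union_right
  calc
    lower r Z ∩ upper r X ∩ upper r Y ∪ lower r X
    _ = (lower r Z ∪ lower r X) ∩ (upper r X ∪ lower r X) ∩ (upper r Y ∪ lower r X) := by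
      rw [Set.inter_union_distrib_right, Set.inter_union_distrib_right]
    _ = (lower r Z ∪ lower r X) ∩ upper r X := by
      rw [Set.union_eq_self_of_subset_right (lower_subset_upper hr), Set.inter_right_comm,
        Set.inter_eq_left.2 hZY]

theorem Kpart_union_Tpart (hr : Relator.LeftTotal r) (A B : Set α) :
    Kpart r A B ∪ Tpart r A B = lower r (A ∪ B) ∩ upper r A := by
  have hA : lower r A ⊆ lower r (A ∪ B) := lower_mono Set.subset_union_left
  rw [Kpart, Tpart, lower_inter_upper_inter_upper_union_lower hr Set.Subset.rfl,
    Set.union_eq_self_of_subset_right hA]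

theorem sTpart_union_Tpart (hr : Relator.LeftTotal r) (A B : Set α) :
    sTpart r A B ∪ Tpart r A B = (lower r Bᶜ ∪ lower r A) ∩ upper r A := by
  have hB : Bᶜ ⊆ A ∪ (A ∪ B)ᶜ := by
    rw [Set.compl_union, Set.union_inter_distrib_left, Set.union_compl_self, Set.univ_inter]
    exact Set.subset_union_right
  exact lower_inter_upper_inter_upper_union_lower hr hB

end PBZ

theorem stmt_16_general {α : Type*} (r : α → α → Prop) (hr : Relator.LeftTotal r)
    (A B : Set α) :
    Kpart r A B ∪ sTpart r A B ∪ Tpart r A B =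
      {x | (cls r x ⊆ A ∪ B ∨ cls r x ⊆ Bᶜ) ∧ (cls r x ∩ A).Nonempty} ∧
    Kpart r A B ∪ sTpart r A B ∪ Tpart r A B =
      (lower r (A ∪ B) ∪ lower r Bᶜ) ∩ upper r A := by
  have hA : lower r A ⊆ lower r (A ∪ B) ∪ lower r Bᶜ :=
    (lower_mono Set.subset_union_left).trans Set.subset_union_left
  have h_approx : Kpart r A B ∪ sTpart r A B ∪ Tpart r A B =
      (lower r (A ∪ B) ∪ lower r Bᶜ) ∩ upper r A := by
    rw [Set.union_union_distrib_right, Kpart_union_Tpart hr, sTpart_union_Tpart hr,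
      ← Set.union_inter_distrib_right, ← Set.union_assoc, Set.union_eq_self_of_subset_right hA]
  exact ⟨h_approx, h_approx⟩

/-- `K(A,B) ∪ sT(A,B) ∪ T(A,B)
= {x : ([x]_R ⊆ A∪B or [x]_R ⊆ U−B) and [x]_R ∩ A ≠ ∅}
= (R̲(A∪B) ∪ R̲(U−B)) ∩ R̄A`. -/
theorem stmt_16 {α : Type*} (r : α → α → Prop) (hr : Equivalence r)
    (A B : Set α) (hAB : A ∩ B = ∅) :
    Kpart r A B ∪ sTpart r A B ∪ Tpart r A B =
      {x | (cls r x ⊆ A ∪ B ∨ cls r x ⊆ Bᶜ) ∧ (cls r x ∩ A).Nonempty} ∧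
    Kpart r A B ∪ sTpart r A B ∪ Tpart r A B =
      (lower r (A ∪ B) ∪ lower r Bᶜ) ∩ upper r A :=
  stmt_16_general r (fun x => ⟨x, hr.refl x⟩) A B
end
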